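/- Let P be a propositional normal logic program, I a model of P, and l an I-partial level mapping such that P satisfies (F) with respect to I and l. Then for every A ∈ dom(l) with l(A) = α: if A ∈ I then A ∈ Φ_P↑(α+1), and if ¬A ∈ I then ¬A ∈ Φ_P↑(α+1). -/

import Mathlib

namespace LP

/-- A literal over a set of propositional atoms: an atom or a negated atom. -/
inductive Lit (atom : Type) where
  | pos : atom → Lit atom
  | neg : atom → Lit atom

/-- The underlying atom of a literal. -/
def Lit.atomOf {atom : Type} : Lit atom → atom
  | .pos a => a
  | .neg a => a

/-- A clause `head ← pos₁,…,posₙ, ¬neg₁,…,¬negₘ`. -/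
structure Clause (atom : Type) where
  head : atom
  pos : Finset atom
  neg : Finset atom

variable {atom : Type}

/-- A (propositional) normal logic program: a set of clauses. -/
abbrev Program (atom : Type) := Set (Clause atom)

/-- Partial interpretations: sets of literals. -/
abbrev Interp (atom : Type) := Set (Lit atom)

def Consistent (I : Interp atom) : Prop := ∀ a : atom, ¬ (Lit.pos a ∈ I ∧ Lit.neg a ∈ I)

def Total (I : Interp atom) : Prop := ∀ a : atom, Lit.pos a ∈ I ∨ Lit.neg a ∈ I

/-- An atom is defined (true or false, i.e. not undefined) in `I`. -/
def Defined (I : Interp atom) (A : atom) : Prop := Lit.pos A ∈ I ∨ Lit.neg A ∈ I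

/-- Every body literal of the clause is true in `I`. -/
def BodyTrue (I : Interp atom) (C : Clause atom) : Prop :=
  (∀ a ∈ C.pos, Lit.pos a ∈ I) ∧ (∀ b ∈ C.neg, Lit.neg b ∈ I)

/-- Some body literal of the clause is false in `I`. -/
def BodyFalse (I : Interp atom) (C : Clause atom) : Prop :=
  (∃ a ∈ C.pos, Lit.neg a ∈ I) ∨ (∃ b ∈ C.neg, Lit.pos b ∈ I)

/-- Three-valued model. -/
def Model3 (P : Program atom) (I : Interp atom) : Prop :=
  Consistent I ∧ ∀ C ∈ P,
    (BodyTrue I C → Lit.pos C.head ∈ I) ∧ (¬ BodyFalse I C → Lit.neg C.head ∉ I)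

/-- Two-valued model. -/
def Model2 (P : Program atom) (M : Set atom) : Prop :=
  ∀ C ∈ P, (∀ a ∈ C.pos, a ∈ M) → (∀ b ∈ C.neg, b ∉ M) → C.head ∈ M

/-- A program is definite if no clause has negative body literals. -/
def Definite (P : Program atom) : Prop := ∀ C ∈ P, C.neg = ∅

/-- The one-step operator `T_P⁺` for definite programs. -/
def Tplus (P : Program atom) (M : Set atom) : Set atom :=
  {A | ∃ C ∈ P, C.head = A ∧ C.neg = ∅ ∧ ∀ a ∈ C.pos, a ∈ M}

def TplusIter (P : Program atom) : ℕ → Set atom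
  | 0 => ∅
  | n + 1 => Tplus P (TplusIter P n)

/-- `T_P⁺ ↑ ω`, the least two-valued model of a definite program. -/
def TplusOmega (P : Program atom) : Set atom := ⋃ n, TplusIter P n

/-- The Gelfond–Lifschitz reduct `P/M`. -/
def GLreduct (P : Program atom) (M : Set atom) : Program atom :=
  {C' | ∃ C ∈ P, (∀ b ∈ C.neg, b ∉ M) ∧ C' = ⟨C.head, C.pos, ∅⟩}

/-- The Gelfond–Lifschitz operator. -/
def GLop (P : Program atom) (M : Set atom) : Set atom := TplusOmega (GLreduct P M)

/-- Stable model. -/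
def Stable (P : Program atom) (M : Set atom) : Prop := GLop P M = M

def posLits (S : Set atom) : Interp atom := Lit.pos '' S
def negLits (S : Set atom) : Interp atom := Lit.neg '' S

/-- Three-valued immediate-consequence operator `T_P`. -/
def TP (P : Program atom) (I : Interp atom) : Set atom :=
  {A | ∃ C ∈ P, C.head = A ∧ BodyTrue I C}

/-- `F_P`: atoms all of whose clauses have false bodies. -/
def FP (P : Program atom) (I : Interp atom) : Set atom :=
  {A | ∀ C ∈ P, C.head = A → BodyFalse I C}

/-- Fitting's operator `Φ_P`. -/
def Phi (P : Program atom) (I : Interp atom) : Interp atom :=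
  posLits (TP P I) ∪ negLits (FP P I)

/-- Knaster–Tarski least (pre-)fixed point of an operator on sets. -/
def lfpSet {L : Type*} (F : Set L → Set L) : Set L := ⋂₀ {I | F I ⊆ I}

/-- Knaster–Tarski greatest (post-)fixed point of an operator on sets. -/
def gfpSet {L : Type*} (F : Set L → Set L) : Set L := ⋃₀ {I | I ⊆ F I}

/-- The Fitting (Kripke–Kleene) model: least fixed point of `Φ_P`. -/
def FittingModel (P : Program atom) : Interp atom := lfpSet (Phi P)

/-- Transfinite iteration `F ↑ α` of an operator starting from `∅`. -/
noncomputable def iterOrd {L : Type*} (F : Set L → Set L) (α : Ordinal.{0}) : Set L :=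
  Ordinal.limitRecOn α ∅ (fun _ ih => F ih) (fun o _ ih => ⋃ β, ⋃ h : β < o, ih β h)

/-- `U` is an unfounded set of `P` with respect to `I`. -/
def Unfounded (P : Program atom) (I : Interp atom) (U : Set atom) : Prop :=
  ∀ A ∈ U, ∀ C ∈ P, C.head = A → BodyFalse I C ∨ ∃ a ∈ C.pos, a ∈ U

/-- The greatest unfounded set of `P` with respect to `I`. -/
def UP (P : Program atom) (I : Interp atom) : Set atom := ⋃₀ {U | Unfounded P I U}

/-- The van Gelder–Ross–Schlipf operator `W_P`. -/
def WP (P : Program atom) (I : Interp atom) : Interp atom :=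
  posLits (TP P I) ∪ negLits (UP P I)

/-- The well-founded model: least fixed point of `W_P`. -/
def WFModel (P : Program atom) : Interp atom := lfpSet (WP P)

/-- `P` satisfies (F) with respect to `I` and the level mapping `l`. -/
def CondF (P : Program atom) (I : Interp atom) (l : atom → Ordinal.{0}) : Prop :=
  ∀ A : atom, Defined I A →
    (Lit.pos A ∈ I ∧ ∃ C ∈ P, C.head = A ∧
        (∀ a ∈ C.pos, Lit.pos a ∈ I ∧ l a < l A) ∧
        (∀ b ∈ C.neg, Lit.neg b ∈ I ∧ l b < l A)) ∨
    (Lit.neg A ∈ I ∧ ∀ C ∈ P, C.head = A →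
        (∃ a ∈ C.pos, Lit.neg a ∈ I ∧ l a < l A) ∨
        (∃ b ∈ C.neg, Lit.pos b ∈ I ∧ l b < l A))

/-- `P` satisfies (WF) with respect to `I` and the level mapping `l`. -/
def CondWF (P : Program atom) (I : Interp atom) (l : atom → Ordinal.{0}) : Prop :=
  ∀ A : atom, Defined I A →
    (Lit.pos A ∈ I ∧ ∃ C ∈ P, C.head = A ∧
        (∀ a ∈ C.pos, Lit.pos a ∈ I ∧ l a < l A) ∧
        (∀ b ∈ C.neg, Lit.neg b ∈ I ∧ l b < l A)) ∨
    (Lit.neg A ∈ I ∧ ∀ C ∈ P, C.head = A →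
        (∃ a ∈ C.pos, Lit.neg a ∈ I ∧ l a ≤ l A) ∨
        (∃ b ∈ C.neg, Lit.pos b ∈ I ∧ l b < l A))

/-- `P` satisfies (WS) with respect to `I` and the level mapping `l`. -/
def CondWS (P : Program atom) (I : Interp atom) (l : atom → Ordinal.{0}) : Prop :=
  ∀ A : atom, Defined I A →
    (Lit.pos A ∈ I ∧ ∃ C ∈ P, C.head = A ∧
        (∀ a ∈ C.pos, Lit.pos a ∈ I ∧ l a < l A) ∧
        (∀ b ∈ C.neg, Lit.neg b ∈ I ∧ l b < l A)) ∨
    (Lit.neg A ∈ I ∧ ∀ C ∈ P, C.head = A →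
        (∃ a ∈ C.pos, Lit.neg a ∈ I ∧ l a < l A) ∨
        ((∀ a ∈ C.pos, l a ≤ l A) ∧ (∀ b ∈ C.neg, l b < l A) ∧
            ∃ a ∈ C.pos, Lit.neg a ∈ I) ∨
        (∃ b ∈ C.neg, Lit.pos b ∈ I ∧ l b < l A))

/-- `A` refers to `B`. -/
def RefersTo (P : Program atom) (A B : atom) : Prop :=
  ∃ C ∈ P, C.head = A ∧ (B ∈ C.pos ∨ B ∈ C.neg)

/-- `A` refers negatively to `B`. -/
def RefersNeg (P : Program atom) (A B : atom) : Prop :=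
  ∃ C ∈ P, C.head = A ∧ B ∈ C.neg

/-- `DepOn P A B`: `A` depends on `B`, i.e. `B ≤ A`. -/
def DepOn (P : Program atom) : atom → atom → Prop := Relation.TransGen (RefersTo P)

/-- `DepNeg P B A`: `B < A`, i.e. `A` depends negatively on `B`. -/
def DepNeg (P : Program atom) (B A : atom) : Prop :=
  ∃ C D, RefersNeg P C D ∧ (DepOn P A C ∨ C = A) ∧ (DepOn P D B ∨ B = D)

/-- `A ~ B`. -/
def Sim (P : Program atom) (A B : atom) : Prop :=
  A = B ∨ (DepNeg P A B ∧ DepNeg P B A)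

/-- The components of `P`: equivalence classes of `~`. -/
def IsComponent (P : Program atom) (C : Set atom) : Prop :=
  ∃ A : atom, C = {B | Sim P A B}

/-- A trivial component: a singleton `{A}` with `A ≮ A`. -/
def TrivialComponent (P : Program atom) (C : Set atom) : Prop :=
  ∃ A : atom, C = {A} ∧ ¬ DepNeg P A A

/-- The ordering `≺` on components. -/
def CompLt (P : Program atom) (C₁ C₂ : Set atom) : Prop :=
  C₁ ≠ C₂ ∧ ∀ A₁ ∈ C₁, ∃ A₂ ∈ C₂, DepNeg P A₁ A₂

def MinimalComponent (P : Program atom) (C : Set atom) : Prop :=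
  IsComponent P C ∧ ¬ ∃ C₂, IsComponent P C₂ ∧ CompLt P C₂ C

/-- The bottom stratum `S(P)`: union of all minimal components. -/
def bottomStratum (P : Program atom) : Set atom :=
  {A | ∃ C, MinimalComponent P C ∧ A ∈ C}

/-- The bottom layer `L(P)`: clauses with head in the bottom stratum. -/
def bottomLayer (P : Program atom) : Program atom :=
  {C ∈ P | C.head ∈ bottomStratum P}

/-- Delete from the body of `C` all literals true in `I`. -/
noncomputable def reduceClause (I : Interp atom) (C : Clause atom) : Clause atom :=
  letI : ∀ p : Prop, Decidable p := fun p => Classical.propDecidable p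
  ⟨C.head, C.pos.filter (fun a => Lit.pos a ∉ I), C.neg.filter (fun b => Lit.neg b ∉ I)⟩

/-- Steps (1) and (2) of the reduct of `P` with respect to `I`. -/
noncomputable def step12 (P : Program atom) (I : Interp atom) : Program atom :=
  {C' | ∃ C ∈ P, Lit.pos C.head ∉ I ∧ ¬ BodyFalse I C ∧ C' = reduceClause I C}

def IsUnitClause (C : Clause atom) : Prop := C.pos = ∅ ∧ C.neg = ∅

/-- The reduct `P/I` of Przymusinska–Przymusinski (steps (1)–(3)). -/
noncomputable def reduct (P : Program atom) (I : Interp atom) : Program atom :=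
  {C ∈ step12 P I | IsUnitClause C ∨ ¬ ∃ C' ∈ step12 P I, C'.head = C.head ∧ IsUnitClause C'}

/-- The atoms occurring in `P`. -/
def atomsOf (P : Program atom) : Set atom :=
  {A | ∃ C ∈ P, A = C.head ∨ A ∈ C.pos ∨ A ∈ C.neg}

/-- `R`: atoms undefined in `N` which are eliminated from `P` by reducing w.r.t. `N`. -/
noncomputable def Ratoms (P : Program atom) (N : Interp atom) : Set atom :=
  {A | A ∈ atomsOf P ∧ A ∉ atomsOf (reduct P N) ∧ ¬ Defined N A}

/-- The definite (partial) model of a definite program `Q`. -/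
def defPartialModel (Q : Program atom) : Interp atom :=
  posLits (TplusOmega Q) ∪ negLits (atomsOf Q \ TplusOmega Q)

/-- The stopping condition of the weakly perfect model construction at `N`. -/
noncomputable def stopCond (P : Program atom) (N : Interp atom) : Prop :=
  reduct P N = ∅ ∨ bottomStratum (reduct P N) = ∅ ∨
    ∃ C ∈ bottomLayer (reduct P N), C.neg ≠ ∅

/-- `M_α` computed from `N_α` (empty if the construction has stopped). -/
noncomputable def Mstep (P : Program atom) (N : Interp atom) : Interp atom :=
  letI : ∀ p : Prop, Decidable p := fun p => Classical.propDecidable p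
  if stopCond P N then ∅
  else defPartialModel (bottomLayer (reduct P N)) ∪ negLits (Ratoms P N)

/-- `N_α = ⋃_{0<δ<α} M_δ` of the weakly perfect model construction. -/
noncomputable def Nseq (P : Program atom) : Ordinal.{0} → Interp atom :=
  Ordinal.lt_wf.fix (C := fun _ => Interp atom)
    (fun α ih => ⋃ β : Ordinal.{0}, ⋃ h : β < α, Mstep P (ih β h))

/-- The stage at which the weakly perfect model construction stops. -/
noncomputable def wpStop (P : Program atom) : Ordinal.{0} :=
  sInf {α | stopCond P (Nseq P α)}

/-- The weakly perfect model `M_P = N_α ∪ ¬R_α` at the stopping stage `α`. -/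
noncomputable def weaklyPerfectModel (P : Program atom) : Interp atom :=
  Nseq P (wpStop P) ∪ negLits (Ratoms P (Nseq P (wpStop P)))

/-- Clause subsumption `C₁ ≼ C₂`. -/
def ClauseSub (C₁ C₂ : Clause atom) : Prop :=
  C₁.head = C₂.head ∧ C₁.pos ⊆ C₂.pos ∧ C₁.neg ⊆ C₂.neg

/-- `P'` subsumes `Q` model-consistently with respect to `I`: `P' ≼_I Q`. -/
def SubsumesMC (P' Q : Program atom) (I : Interp atom) : Prop :=
  (∀ C₁ ∈ P', ∃ C₂ ∈ Q, ClauseSub C₁ C₂ ∧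
      (∀ a ∈ C₂.pos, a ∉ C₁.pos → Lit.pos a ∈ I) ∧
      (∀ b ∈ C₂.neg, b ∉ C₁.neg → Lit.neg b ∈ I)) ∧
  (∀ C₂ ∈ Q, BodyTrue I C₂ → Lit.pos C₂.head ∉ I → ∃ C₁ ∈ P', ClauseSub C₁ C₂)

/-!
For consistent `I`, condition (F) says that every literal `x ∈ I` is derived by a single application
of the monotone operator `Φ_P` to the literals of `I` of level below that of `x`. Well-founded
induction on the level places those literals in `Φ_P ↑ l x`, and so `x` in `Φ_P ↑ (l x + 1)`.
-/

section IterOrd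

theorem iterOrd_zero {L : Type*} (F : Set L → Set L) : iterOrd F 0 = ∅ :=
  Ordinal.limitRecOn_zero ..

theorem iterOrd_add_one {L : Type*} (F : Set L → Set L) (α : Ordinal.{0}) :
    iterOrd F (α + 1) = F (iterOrd F α) :=
  Ordinal.limitRecOn_add_one ..

theorem iterOrd_of_isSuccLimit {L : Type*} (F : Set L → Set L) {α : Ordinal.{0}}
    (hα : Order.IsSuccLimit α) : iterOrd F α = ⋃ β, ⋃ _ : β < α, iterOrd F β :=
  Ordinal.limitRecOn_limit _ _ _ _ hα

variable {L : Type} {F : Set L → Set L}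

theorem iterOrd_eq_lfpApprox (F : Set L →o Set L) (α : Ordinal.{0}) :
    iterOrd F α = OrdinalApprox.lfpApprox F ⊥ α := by
  induction α using Ordinal.limitRecOn with
  | zero => rw [iterOrd_zero, OrdinalApprox.lfpApprox_zero, Set.bot_eq_empty]
  | add_one α ih => rw [iterOrd_add_one, ih, OrdinalApprox.lfpApprox_add_one F bot_le]
  | limit α hα ih =>
    rw [iterOrd_of_isSuccLimit F hα, OrdinalApprox.lfpApprox_of_isSuccLimit F hα, iSup_subtype]
    exact Set.iUnion₂_congr ih

theorem iterOrd_monotone (hF : Monotone F) : Monotone (iterOrd F) := by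
  have iterOrd_eq : iterOrd F = OrdinalApprox.lfpApprox ⟨F, hF⟩ ⊥ :=
    funext (iterOrd_eq_lfpApprox ⟨F, hF⟩)
  rw [iterOrd_eq]
  exact OrdinalApprox.lfpApprox_mono_right _

theorem mem_iterOrd_add_one_of_mem_apply_lt (hF : Monotone F) {S : Set L} {r : L → Ordinal.{0}}
    (hS : ∀ x ∈ S, x ∈ F {y ∈ S | r y < r x}) {x : L} (hx : x ∈ S) :
    x ∈ iterOrd F (r x + 1) := by
  induction x using WellFounded.induction (InvImage.wf r Ordinal.lt_wf) with
  | _ x ih =>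
  have lower_subset : {y ∈ S | r y < r x} ⊆ iterOrd F (r x) := fun y ⟨hy, hlt⟩ =>
    iterOrd_monotone hF (Order.add_one_le_of_lt hlt) (ih y hlt hy)
  rw [iterOrd_add_one]
  exact hF lower_subset (hS x hx)

end IterOrd

section Phi

variable {I J : Interp atom} {C : Clause atom} {P : Program atom} {A : atom}

theorem BodyTrue.mono (hIJ : I ⊆ J) (hC : BodyTrue I C) : BodyTrue J C :=
  ⟨fun a ha => hIJ (hC.1 a ha), fun b hb => hIJ (hC.2 b hb)⟩

theorem BodyFalse.mono (hIJ : I ⊆ J) (hC : BodyFalse I C) : BodyFalse J C :=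
  hC.imp (fun ⟨a, ha, haI⟩ => ⟨a, ha, hIJ haI⟩) (fun ⟨b, hb, hbI⟩ => ⟨b, hb, hIJ hbI⟩)

theorem TP_monotone (P : Program atom) : Monotone (TP P) :=
  fun _ _ hIJ _ ⟨C, hC, hhead, hbody⟩ => ⟨C, hC, hhead, hbody.mono hIJ⟩

theorem FP_monotone (P : Program atom) : Monotone (FP P) :=
  fun _ _ hIJ _ hA C hC hhead => (hA C hC hhead).mono hIJ

theorem Phi_monotone (P : Program atom) : Monotone (Phi P) := fun _ _ hIJ =>
  Set.union_subset_union (Set.image_mono (TP_monotone P hIJ)) (Set.image_mono (FP_monotone P hIJ))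

theorem pos_mem_Phi (hA : A ∈ TP P I) : Lit.pos A ∈ Phi P I :=
  Or.inl (Set.mem_image_of_mem _ hA)

theorem neg_mem_Phi (hA : A ∈ FP P I) : Lit.neg A ∈ Phi P I :=
  Or.inr (Set.mem_image_of_mem _ hA)

end Phi

section CondF

variable {P : Program atom} {I : Interp atom} {l : atom → Ordinal.{0}}

/-- The part of the interpretation `I` of level below `α`, where the level mapping `l` is extended
to literals by `l (¬A) = l A`: with `α = l A`, the literals available to derive `A` or `¬A`
under (F). -/
def litsBelow (I : Interp atom) (l : atom → Ordinal.{0}) (α : Ordinal.{0}) : Interp atom :=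
  {x ∈ I | l x.atomOf < α}

theorem CondF.mem_TP_or_mem_FP (hF : CondF P I l) {A : atom} (hA : Defined I A) :
    (Lit.pos A ∈ I ∧ A ∈ TP P (litsBelow I l (l A))) ∨
      (Lit.neg A ∈ I ∧ A ∈ FP P (litsBelow I l (l A))) := hF A hA

theorem CondF.mem_Phi_litsBelow (hI : Consistent I) (hF : CondF P I l) {x : Lit atom}
    (hx : x ∈ I) : x ∈ Phi P (litsBelow I l (l x.atomOf)) := by
  cases x with
  | pos A =>
    rcases hF.mem_TP_or_mem_FP (Or.inl hx) with ⟨_, hA⟩ | ⟨hneg, _⟩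
    · exact pos_mem_Phi hA
    · exact absurd ⟨hx, hneg⟩ (hI A)
  | neg A =>
    rcases hF.mem_TP_or_mem_FP (Or.inr hx) with ⟨hpos, _⟩ | ⟨_, hA⟩
    · exact absurd ⟨hpos, hx⟩ (hI A)
    · exact neg_mem_Phi hA

theorem condF_implies_in_iterate_general (hI : Consistent I) (hF : CondF P I l) {x : Lit atom}
    (hx : x ∈ I) : x ∈ iterOrd (Phi P) (l x.atomOf + 1) :=
  mem_iterOrd_add_one_of_mem_apply_lt (r := fun y => l y.atomOf) (Phi_monotone P)
    (fun _ => hF.mem_Phi_litsBelow hI) hx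

end CondF

/-- if `P` satisfies (F) w.r.t. a model `I` and level mapping `l`, then
every literal of `I` appears in the iterate `Φ_P↑(l(A)+1)`. -/
theorem condF_implies_in_iterate {atom : Type} [Countable atom] (P : Program atom)
    (I : Interp atom) (l : atom → Ordinal.{0}) (hI : Model3 P I) (hF : CondF P I l) :
    ∀ A : atom,
      (Lit.pos A ∈ I → Lit.pos A ∈ iterOrd (Phi P) (l A + 1)) ∧
      (Lit.neg A ∈ I → Lit.neg A ∈ iterOrd (Phi P) (l A + 1)) :=
  fun _ => ⟨condF_implies_in_iterate_general hI.1 hF, condF_implies_in_iterate_general hI.1 hF⟩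

end LP
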